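/- Let F ∈ 𝒮(ℝ³ × ℝ, ℂ) be a Schwartz function and M ∈ ℕ₀. For t > 0 define p_t: ℝ³ → ℂ by p_t(v) := ∫_{ℝ³} ( PV ∫_ℝ F(k,u) e^{−i(u + k·v)t}/(u + k·v) du ) dk, where PV denotes the principal value lim_{δ→0⁺} ∫_{|u+k·v|≥δ}. Then, as t → +∞, p_t converges to the function v ↦ −iπ ∫_{ℝ³} F(k, −k·v) dk uniformly on ℝ³ together with all its derivatives up to order M. -/

import Mathlib

/-!
The substitution `s = u + k·v` turns the inner principal value into `PV ∫ g(s) e^{-ist}/s ds` with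
`g(s) = F(k, s - k·v)`. As a function of the frequency `x = t/2π`, this principal value has
derivative `-2πi 𝓕 g x` and tends to `-iπ g(0)` at infinity (Fourier inversion for the part odd in
`x`, Riemann–Lebesgue for the even part). Integrating from `x` to infinity gives the exact formula
`PV = -iπ g(0) + 2πi ∫_{w > x} 𝓕 g w dw` (`Nice.pvHalf_eq`).

Since `𝓕 g w = e^{-2πi w k·v} G(k, w)`, where `G = pft F` is the Fourier transform of `F` in its last
variable, integration over `k` shows that `p_t` differs from its limit by
`2πi ∫_{ℝ³} ∫_{w > x} e^{-2πi w k·v} G(k, w) dw dk` (`integral_pvInner_eq`), and the limit itself is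
an integral of the same type over all `w`. Such integrals are Fourier integrals in `v` once `(k, w)`
is replaced by `(w k, k, w)`; since `G` decays rapidly, they are smooth in `v`, and each derivative
of the tail over `w > x` is `O(1/x)` uniformly in `v` (`norm_iteratedFDeriv_osc_le`).
-/

open MeasureTheory Filter RealInnerProductSpace

noncomputable section

local notation "E3" => EuclideanSpace ℝ (Fin 3)

/-- The inner principal value `PV ∫ F(k,u) e^{−i(u+k·v)t}/(u+k·v) du`, defined via `limUnder`
(a limit along `δ → 0⁺` of the integrals over `{|u + k·v| ≥ δ}`). -/
def pvInner (F : SchwartzMap (EuclideanSpace ℝ (Fin 3) × ℝ) ℂ) (t : ℝ) (k v : E3) : ℂ :=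
  limUnder (nhdsWithin (0 : ℝ) (Set.Ioi 0)) fun δ =>
    ∫ u in {u : ℝ | δ ≤ |u + (⟪k, v⟫ : ℝ)|},
      F (k, u) * Complex.exp (-Complex.I * (((u + (⟪k, v⟫ : ℝ) : ℝ) : ℂ)) * (t : ℂ)) /
        (((u + (⟪k, v⟫ : ℝ) : ℝ) : ℂ))

open scoped FourierTransform Topology

/-! ### The one-dimensional principal value -/

lemma pv_integrableOn {φ : ℝ → ℂ} (hi : Integrable φ) {K : ℝ}
    (hK : ∀ s, 0 < s → ‖φ s - φ (-s)‖ ≤ K * s) :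
    IntegrableOn (fun s : ℝ => (φ s - φ (-s)) / (s : ℂ)) (Set.Ioi 0) := by
  have hn : Integrable fun s => φ (-s) := hi.comp_neg
  have hdom : IntegrableOn (fun s : ℝ => (Set.Ioc (0 : ℝ) 1).indicator (fun _ => K) s
      + (‖φ s‖ + ‖φ (-s)‖)) (Set.Ioi 0) := by
    refine Integrable.integrableOn (Integrable.add ?_ (hi.norm.add hn.norm))
    exact (integrable_indicator_iff measurableSet_Ioc).2 (integrableOn_const (by simp))
  refine Integrable.mono' hdom ?_ ?_
  · refine AEStronglyMeasurable.restrict ?_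
    exact ((hi.sub hn).aestronglyMeasurable.aemeasurable.div
      (by fun_prop)).aestronglyMeasurable
  · refine (ae_restrict_iff' measurableSet_Ioi).2 (ae_of_all _ fun s hs => ?_)
    have hs : (0 : ℝ) < s := hs
    rw [norm_div, Complex.norm_real, Real.norm_of_nonneg hs.le, div_le_iff₀ hs]
    by_cases h1 : s ≤ 1
    · rw [Set.indicator_of_mem (show s ∈ Set.Ioc (0 : ℝ) 1 from ⟨hs, h1⟩)]
      refine (hK s hs).trans ?_
      have : 0 ≤ ‖φ s‖ + ‖φ (-s)‖ := by positivity
      nlinarith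
    · rw [Set.indicator_of_notMem (fun h => h1 h.2)]
      refine (norm_sub_le _ _).trans ?_
      have : 0 ≤ ‖φ s‖ + ‖φ (-s)‖ := by positivity
      push Not at h1
      nlinarith

/-- Truncated integrals of `φ(s)/s` converge: pairing `s` with `-s` turns them into integrals of
the integrable function `(φ s - φ (-s)) / s` over `(δ, ∞)`. -/
lemma pv_tendsto {φ : ℝ → ℂ} (hi : Integrable φ) {K : ℝ}
    (hK : ∀ s, 0 < s → ‖φ s - φ (-s)‖ ≤ K * s) :
    Tendsto (fun δ : ℝ => ∫ s in {s : ℝ | δ ≤ |s|}, φ s / (s : ℂ)) (𝓝[>] 0)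
      (𝓝 (∫ s in Set.Ioi (0 : ℝ), (φ s - φ (-s)) / (s : ℂ))) := by
  have hint := pv_integrableOn hi hK
  have hcov : AECover ((volume : Measure ℝ).restrict (Set.Ioi 0)) (𝓝[>] (0 : ℝ))
      (fun δ : ℝ => Set.Ioi δ) :=
    aecover_Ioi_of_Ioi (tendsto_id.mono_left nhdsWithin_le_nhds)
  have hlim := hcov.integral_tendsto_of_countably_generated hint
  refine hlim.congr' ?_
  filter_upwards [self_mem_nhdsWithin] with δ hδ
  have hδ : (0 : ℝ) < δ := hδ
  have hfar : ∀ {ψ : ℝ → ℂ}, Integrable ψ →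
      IntegrableOn (fun s : ℝ => ψ s / (s : ℂ)) {s : ℝ | δ ≤ |s|} := by
    intro ψ hψ
    have hm : MeasurableSet {s : ℝ | δ ≤ |s|} := measurableSet_le (by fun_prop) (by fun_prop)
    refine Integrable.mono' (hψ.norm.const_mul δ⁻¹).integrableOn
      (hψ.aestronglyMeasurable.aemeasurable.div
        (by fun_prop)).aestronglyMeasurable.restrict ?_
    refine (ae_restrict_iff' hm).2 (ae_of_all _ fun s hs => ?_)
    have hs : δ ≤ |s| := hs
    rw [norm_div, Complex.norm_real, Real.norm_eq_abs, div_eq_inv_mul]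
    gcongr
  have hset : {s : ℝ | δ ≤ |s|} = Set.Iic (-δ) ∪ Set.Ici δ := by
    ext s
    simp only [Set.mem_ofPred_eq, Set.mem_union, Set.mem_Iic, Set.mem_Ici, le_abs]
    constructor <;> rintro (h | h) <;> first | (left; linarith) | (right; linarith)
  have hI := hfar hi
  have hI' := hfar hi.comp_neg
  rw [hset] at hI hI'
  rw [Measure.restrict_restrict measurableSet_Ioi, Set.inter_eq_left.2 (Set.Ioi_subset_Ioi hδ.le),
    hset, setIntegral_union ?_ measurableSet_Ici hI.left_of_union hI.right_of_union,
    integral_Ici_eq_integral_Ioi]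
  · have := integral_comp_neg_Ioi δ (fun s : ℝ => φ s / (s : ℂ))
    rw [← this, ← integral_add]
    · refine setIntegral_congr_fun measurableSet_Ioi fun s _ => ?_
      simp only [Complex.ofReal_neg, div_neg]
      ring
    · refine (hI'.right_of_union.mono_set Set.Ioi_subset_Ici_self).neg.congr ?_
      exact ae_of_all _ fun s => by simp [div_neg]
    · exact hI.right_of_union.mono_set Set.Ioi_subset_Ici_self
  · rw [Set.disjoint_left]
    intro s h1 h2
    simp only [Set.mem_Iic, Set.mem_Ici] at h1 h2
    linarith

/-- The kernel `e^{-2πi s x}` of the one-dimensional Fourier transform. -/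
def fker (x s : ℝ) : ℂ := Complex.exp (((-2 * Real.pi * s * x : ℝ) : ℂ) * Complex.I)

lemma norm_fker (x s : ℝ) : ‖fker x s‖ = 1 := Complex.norm_exp_ofReal_mul_I _

lemma continuous_fker : Continuous fun p : ℝ × ℝ => fker p.1 p.2 := by
  unfold fker; fun_prop

lemma continuous_fker_right (x : ℝ) : Continuous (fker x) := by
  unfold fker; fun_prop

lemma fker_symm (x s : ℝ) : fker (-x) s = fker x (-s) := by
  unfold fker; congr 3; ring

lemma hasDerivAt_fker_left (x s : ℝ) :
    HasDerivAt (fun y => fker y s) (-2 * Real.pi * s * Complex.I * fker x s) x := by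
  have h : HasDerivAt (fun y : ℝ => ((-2 * Real.pi * s * y : ℝ) : ℂ) * Complex.I)
      (((-2 * Real.pi * s : ℝ) : ℂ) * Complex.I) x := by
    have := ((hasDerivAt_id x).const_mul (-2 * Real.pi * s)).ofReal_comp.mul_const Complex.I
    simpa using this
  have := h.cexp
  unfold fker
  convert this using 1
  push_cast; ring

lemma hasDerivAt_fker_right (x s : ℝ) :
    HasDerivAt (fun y => fker x y) (-2 * Real.pi * x * Complex.I * fker x s) s := by
  have := hasDerivAt_fker_left s x
  have hs : ∀ a b, fker a b = fker b a := fun a b => by unfold fker; congr 3; ring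
  simpa only [hs x] using this

lemma fourier_eq_fker (g : ℝ → ℂ) (x : ℝ) : 𝓕 g x = ∫ s, g s * fker x s := by
  rw [Real.fourier_real_eq_integral_exp_smul]
  simp only [fker, smul_eq_mul, mul_comm (g _)]

/-- The class of one-dimensional profiles for which the principal value is analysed:
bounded integrable functions with bounded derivative and integrable Fourier transform. -/
structure Nice (g : ℝ → ℂ) : Prop where
  diff : Differentiable ℝ g
  bdd : ∃ B, ∀ s, ‖g s‖ ≤ B
  bdd_deriv : ∃ C, ∀ s, ‖deriv g s‖ ≤ C
  int : Integrable g
  int_fourier : Integrable (𝓕 g)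

lemma Nice.int_mul_fker {g : ℝ → ℂ} (hg : Nice g) (x : ℝ) :
    Integrable fun s => g s * fker x s :=
  hg.int.mul_bdd (c := 1) (continuous_fker_right x).aestronglyMeasurable
    (ae_of_all _ fun s => (norm_fker x s).le)

lemma Nice.odd_part_bound {g : ℝ → ℂ} (hg : Nice g) (x : ℝ) :
    ∃ K, ∀ s, 0 < s → ‖g s * fker x s - g (-s) * fker x (-s)‖ ≤ K * s := by
  obtain ⟨B, hB⟩ := hg.bdd
  obtain ⟨C, hC⟩ := hg.bdd_deriv
  have hB0 : 0 ≤ B := (norm_nonneg _).trans (hB 0)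
  refine ⟨(C + B * (2 * Real.pi * |x|)) * 2, fun s hs => ?_⟩
  have hd : ∀ y ∈ (Set.univ : Set ℝ), HasDerivWithinAt (fun y => g y * fker x y)
      (deriv g y * fker x y + g y * (-2 * Real.pi * x * Complex.I * fker x y)) Set.univ y :=
    fun y _ => ((hg.diff y).hasDerivAt.mul (hasDerivAt_fker_right x y)).hasDerivWithinAt
  have hb : ∀ y ∈ (Set.univ : Set ℝ),
      ‖deriv g y * fker x y + g y * (-2 * Real.pi * x * Complex.I * fker x y)‖ ≤
        C + B * (2 * Real.pi * |x|) := by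
    intro y _
    refine (norm_add_le _ _).trans ?_
    have h2 : ‖(-2 * Real.pi * x * Complex.I * fker x y : ℂ)‖ = 2 * Real.pi * |x| := by
      simp [norm_fker, abs_of_pos Real.pi_pos]
    rw [norm_mul, norm_mul (g y), norm_fker, mul_one, h2]
    exact add_le_add (hC y) (mul_le_mul_of_nonneg_right (hB y) (by positivity))
  have := convex_univ.norm_image_sub_le_of_norm_hasDerivWithin_le hd hb
    (Set.mem_univ (-s)) (Set.mem_univ s)
  refine this.trans (le_of_eq ?_)
  rw [Real.norm_of_nonneg (by linarith)]
  ring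

/-- The value of `PV ∫ g(s) e^{-2πi s x} / s ds`, written as an absolutely convergent integral
by pairing `s` with `-s`. -/
def pvHalf (g : ℝ → ℂ) (x : ℝ) : ℂ :=
  ∫ s in Set.Ioi (0 : ℝ), (g s * fker x s - g (-s) * fker x (-s)) / (s : ℂ)

lemma Nice.tendsto_pvHalf {g : ℝ → ℂ} (hg : Nice g) (x : ℝ) :
    Tendsto (fun δ : ℝ => ∫ s in {s : ℝ | δ ≤ |s|}, g s * fker x s / (s : ℂ)) (𝓝[>] 0)
      (𝓝 (pvHalf g x)) := by
  obtain ⟨K, hK⟩ := hg.odd_part_bound x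
  exact pv_tendsto (hg.int_mul_fker x) hK

/-- Differentiation in the frequency cancels the singular factor `1 / s`. -/
lemma Nice.hasDerivAt_pvHalf {g : ℝ → ℂ} (hg : Nice g) (x : ℝ) :
    HasDerivAt (pvHalf g) (-2 * Real.pi * Complex.I * 𝓕 g x) x := by
  have hint : ∀ y, IntegrableOn
      (fun s : ℝ => (g s * fker y s - g (-s) * fker y (-s)) / (s : ℂ)) (Set.Ioi 0) := by
    intro y
    obtain ⟨K, hK⟩ := hg.odd_part_bound y
    exact pv_integrableOn (hg.int_mul_fker y) hK
  let F' : ℝ → ℝ → ℂ := fun y s =>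
    -2 * Real.pi * Complex.I * (g s * fker y s + g (-s) * fker y (-s))
  have hF'int : ∀ y, Integrable (F' y) := fun y =>
    ((hg.int_mul_fker y).add (hg.int_mul_fker y).comp_neg).const_mul _
  have key := (hasDerivAt_integral_of_dominated_loc_of_deriv_le
    (μ := volume.restrict (Set.Ioi (0 : ℝ))) (x₀ := x) (s := Set.univ)
    (bound := fun s => 2 * Real.pi * (‖g s‖ + ‖g (-s)‖))
    (F := fun y s => (g s * fker y s - g (-s) * fker y (-s)) / (s : ℂ)) (F' := F')
    univ_mem (Eventually.of_forall fun y => (hint y).aestronglyMeasurable) (hint x)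
    (hF'int x).aestronglyMeasurable.restrict ?_ ?_ ?_).2
  · have hval : ∫ s in Set.Ioi (0 : ℝ), F' x s = -2 * Real.pi * Complex.I * 𝓕 g x := by
      rw [integral_const_mul, fourier_eq_fker]
      congr 1
      rw [integral_add (hg.int_mul_fker x).integrableOn (hg.int_mul_fker x).comp_neg.integrableOn,
        integral_comp_neg_Ioi 0 (fun s => g s * fker x s), neg_zero, add_comm]
      exact intervalIntegral.integral_Iic_add_Ioi (hg.int_mul_fker x).integrableOn
        (hg.int_mul_fker x).integrableOn
    rw [hval] at key
    exact key
  · refine ae_of_all _ fun s y _ => ?_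
    have h2 : ‖(-2 * Real.pi * Complex.I : ℂ)‖ = 2 * Real.pi := by
      simp [abs_of_pos Real.pi_pos]
    rw [norm_mul, h2]
    gcongr
    refine (norm_add_le _ _).trans ?_
    simp [norm_fker]
  · exact ((hg.int.norm.add hg.int.comp_neg.norm).const_mul _).integrableOn
  · refine (ae_restrict_iff' measurableSet_Ioi).2 (ae_of_all _ fun s hs y _ => ?_)
    have hs0 : (s : ℂ) ≠ 0 := by exact_mod_cast (ne_of_gt hs)
    have := (((hasDerivAt_fker_left y s).const_mul (g s)).sub
      ((hasDerivAt_fker_left y (-s)).const_mul (g (-s)))).div_const (s : ℂ)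
    refine this.congr_deriv ?_
    simp only [F', Complex.ofReal_neg]
    field_simp
    ring

/-- Fourier inversion. -/
lemma Nice.integral_fourier {g : ℝ → ℂ} (hg : Nice g) (s : ℝ) :
    ∫ w, fker (-s) w * 𝓕 g w = g s := by
  have h := congrFun (hg.diff.continuous.fourierInv_fourier_eq hg.int hg.int_fourier) s
  rw [Real.fourierInv_eq'] at h
  rw [← h]
  refine integral_congr_ae (ae_of_all _ fun w => ?_)
  simp only [fker, smul_eq_mul]
  congr 3
  simp
  ring

/-- `pvHalf g x - pvHalf g (-x)` is an integral of `𝓕 g` over `[-x, x]` and tends to `-2πi g(0)` by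
Fourier inversion; `pvHalf g x + pvHalf g (-x)` only involves the integrable function
`(g s - g (-s)) / s` and tends to `0` by the Riemann–Lebesgue lemma. -/
lemma Nice.tendsto_atTop_pvHalf {g : ℝ → ℂ} (hg : Nice g) :
    Tendsto (pvHalf g) atTop (𝓝 (-Complex.I * Real.pi * g 0)) := by
  have hdiff : Tendsto (fun x => pvHalf g x - pvHalf g (-x)) atTop
      (𝓝 (-2 * Real.pi * Complex.I * g 0)) := by
    have hi : Integrable fun x => -2 * Real.pi * Complex.I * 𝓕 g x := hg.int_fourier.const_mul _
    have h := intervalIntegral_tendsto_integral hi tendsto_neg_atTop_atBot tendsto_id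
    have h0 : ∫ w, 𝓕 g w = g 0 := by
      rw [← hg.integral_fourier 0]
      simp [fker]
    rw [integral_const_mul, h0] at h
    refine h.congr fun x => ?_
    exact intervalIntegral.integral_eq_sub_of_hasDerivAt
      (fun y _ => hg.hasDerivAt_pvHalf y) hi.intervalIntegrable
  have hsum : Tendsto (fun x => pvHalf g x + pvHalf g (-x)) atTop (𝓝 0) := by
    let ψ : ℝ → ℂ := (Set.Ioi (0 : ℝ)).indicator fun s => (g s - g (-s)) / (s : ℂ)
    have hz := Real.zero_at_infty_fourier ψ
    have h1 : Tendsto (𝓕 ψ) atTop (𝓝 0) := hz.mono_left atTop_le_cocompact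
    have h2 : Tendsto (fun x => 𝓕 ψ (-x)) atTop (𝓝 0) :=
      (hz.mono_left atBot_le_cocompact).comp tendsto_neg_atTop_atBot
    have h3 := h1.add h2
    rw [add_zero] at h3
    have hψ : IntegrableOn (fun s : ℝ => (g s - g (-s)) / (s : ℂ)) (Set.Ioi 0) := by
      obtain ⟨K, hK⟩ := hg.odd_part_bound 0
      simp only [fker, mul_zero, Complex.ofReal_zero, zero_mul, Complex.exp_zero, mul_one] at hK
      exact pv_integrableOn hg.int hK
    have hψx : ∀ x, IntegrableOn (fun s : ℝ => (g s - g (-s)) / (s : ℂ) * fker x s)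
        (Set.Ioi 0) := fun x =>
      Integrable.mul_bdd (c := 1) hψ (continuous_fker_right x).aestronglyMeasurable
        (ae_of_all _ fun s => (norm_fker x s).le)
    have hFψ : ∀ x, 𝓕 ψ x = ∫ s in Set.Ioi (0 : ℝ), (g s - g (-s)) / (s : ℂ) * fker x s := by
      intro x
      rw [fourier_eq_fker, ← integral_indicator measurableSet_Ioi]
      refine integral_congr_ae (ae_of_all _ fun s => ?_)
      simp only [ψ, Set.indicator_mul_left]
    have hint : ∀ y, IntegrableOn
        (fun s : ℝ => (g s * fker y s - g (-s) * fker y (-s)) / (s : ℂ)) (Set.Ioi 0) := by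
      intro y
      obtain ⟨K, hK⟩ := hg.odd_part_bound y
      exact pv_integrableOn (hg.int_mul_fker y) hK
    refine h3.congr fun x => ?_
    rw [hFψ, hFψ, ← integral_add (hψx x) (hψx (-x))]
    unfold pvHalf
    rw [← integral_add (hint x) (hint (-x))]
    refine integral_congr_ae (ae_of_all _ fun s => ?_)
    simp only [fker_symm, neg_neg]
    ring
  have h := (hsum.add hdiff).const_mul (1 / 2 : ℂ)
  convert h using 1
  · ext x; ring
  · congr 1; ring

/-- The explicit form of the principal value: limit plus a Fourier tail. -/
lemma Nice.pvHalf_eq {g : ℝ → ℂ} (hg : Nice g) (x : ℝ) :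
    pvHalf g x = -Complex.I * Real.pi * g 0
      + 2 * Real.pi * Complex.I * ∫ w in Set.Ioi x, 𝓕 g w := by
  have h := integral_Ioi_of_hasDerivAt_of_tendsto' (a := x)
    (fun y _ => hg.hasDerivAt_pvHalf y) (hg.int_fourier.const_mul _).integrableOn
    hg.tendsto_atTop_pvHalf
  rw [integral_const_mul] at h
  linear_combination h

/-! ### Partial Fourier transform in the last variable -/

open LineDeriv

/-- The partial Fourier transform of `F` in its last variable. -/
def pft (F : SchwartzMap (E3 × ℝ) ℂ) (p : E3 × ℝ) : ℂ := 𝓕 (fun u : ℝ => F (p.1, u)) p.2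

lemma schwartz_decay (F : SchwartzMap (E3 × ℝ) ℂ) (m : ℕ) :
    ∃ C, ∀ x, (1 + ‖x‖) ^ m * ‖F x‖ ≤ C := by
  refine ⟨2 ^ m * ((Finset.Iic (m, 0)).sup
    fun m => SchwartzMap.seminorm ℝ m.1 m.2) F, fun x => ?_⟩
  have := SchwartzMap.one_add_le_sup_seminorm_apply (𝕜 := ℝ) (m := (m, 0)) le_rfl le_rfl F x
  rw [norm_iteratedFDeriv_zero] at this
  exact this

lemma schwartz_decay_prod (F : SchwartzMap (E3 × ℝ) ℂ) (m : ℕ) :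
    ∃ C, ∀ k u, (1 + ‖k‖) ^ m * ‖F (k, u)‖ ≤ C * (1 + ‖u‖) ^ (-2 : ℝ) := by
  obtain ⟨C, hC⟩ := schwartz_decay F (m + 2)
  refine ⟨C, fun k u => ?_⟩
  have hu : (0 : ℝ) < 1 + ‖u‖ := by positivity
  rw [Real.rpow_neg hu.le, Real.rpow_two, ← div_eq_mul_inv, le_div_iff₀ (by positivity)]
  refine le_trans ?_ (hC (k, u))
  have h1 : ‖k‖ ≤ ‖(k, u)‖ := norm_fst_le (k, u)
  have h2 : ‖u‖ ≤ ‖(k, u)‖ := norm_snd_le (k, u)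
  rw [pow_add]
  calc (1 + ‖k‖) ^ m * ‖F (k, u)‖ * (1 + ‖u‖) ^ 2
      = ((1 + ‖k‖) ^ m * (1 + ‖u‖) ^ 2) * ‖F (k, u)‖ := by ring
    _ ≤ ((1 + ‖(k, u)‖) ^ m * (1 + ‖(k, u)‖) ^ 2) * ‖F (k, u)‖ := by gcongr

lemma integrable_japanese_real : Integrable fun u : ℝ => (1 + ‖u‖) ^ (-2 : ℝ) :=
  integrable_one_add_norm (by simp)

lemma integrable_slice (F : SchwartzMap (E3 × ℝ) ℂ) (k : E3) :
    Integrable fun u : ℝ => F (k, u) := by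
  obtain ⟨C, hC⟩ := schwartz_decay_prod F 0
  refine (integrable_japanese_real.const_mul C).mono' ?_ (ae_of_all _ fun u => ?_)
  · exact (F.continuous.comp (by fun_prop)).aestronglyMeasurable
  · simpa using hC k u

lemma hasDerivAt_slice (F : SchwartzMap (E3 × ℝ) ℂ) (k : E3) (u : ℝ) :
    HasDerivAt (fun u : ℝ => F (k, u)) ((∂_{((0 : E3), (1 : ℝ))} F) (k, u)) u := by
  have h1 : HasDerivAt (fun u : ℝ => (k, u)) ((0 : E3), (1 : ℝ)) u :=
    (hasDerivAt_const u k).prodMk (hasDerivAt_id u)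
  exact (F.hasFDerivAt (k, u)).comp_hasDerivAt u h1

lemma deriv_slice (F : SchwartzMap (E3 × ℝ) ℂ) (k : E3) :
    deriv (fun u : ℝ => F (k, u)) = fun u => (∂_{((0 : E3), (1 : ℝ))} F) (k, u) :=
  funext fun u => (hasDerivAt_slice F k u).deriv

lemma pft_lineDeriv (F : SchwartzMap (E3 × ℝ) ℂ) (p : E3 × ℝ) :
    pft (∂_{((0 : E3), (1 : ℝ))} F) p = 2 * Real.pi * Complex.I * p.2 * pft F p := by
  unfold pft
  rw [← deriv_slice, Real.fourier_deriv (integrable_slice F p.1)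
    (fun u => (hasDerivAt_slice F p.1 u).differentiableAt)]
  · rfl
  · rw [deriv_slice]; exact integrable_slice _ _

/-- Rapid decay in `k` is inherited from `F`; a power of `w` is traded for a derivative of `F` in
its last variable. -/
lemma pft_decay (m N : ℕ) : ∀ F : SchwartzMap (E3 × ℝ) ℂ,
    ∃ C, ∀ p : E3 × ℝ, (1 + ‖p.1‖) ^ m * (1 + ‖p.2‖) ^ N * ‖pft F p‖ ≤ C := by
  induction N with
  | zero =>
    intro F
    obtain ⟨C, hC⟩ := schwartz_decay_prod F m
    refine ⟨∫ u : ℝ, C * (1 + ‖u‖) ^ (-2 : ℝ), fun p => ?_⟩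
    have h1 : ‖pft F p‖ ≤ ∫ u, ‖F (p.1, u)‖ := by
      unfold pft
      rw [fourier_eq_fker]
      refine (norm_integral_le_integral_norm _).trans (le_of_eq ?_)
      simp [norm_fker]
    calc (1 + ‖p.1‖) ^ m * (1 + ‖p.2‖) ^ 0 * ‖pft F p‖
        ≤ (1 + ‖p.1‖) ^ m * ∫ u, ‖F (p.1, u)‖ := by rw [pow_zero, mul_one]; gcongr
      _ = ∫ u, (1 + ‖p.1‖) ^ m * ‖F (p.1, u)‖ := by rw [integral_const_mul]
      _ ≤ _ := integral_mono ((integrable_slice F p.1).norm.const_mul _)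
          (integrable_japanese_real.const_mul C) fun u => hC p.1 u
  | succ N ih =>
    intro F
    obtain ⟨C₁, h₁⟩ := ih F
    obtain ⟨C₂, h₂⟩ := ih (∂_{((0 : E3), (1 : ℝ))} F)
    refine ⟨C₁ + C₂, fun p => ?_⟩
    have h3 := h₂ p
    rw [pft_lineDeriv] at h3
    have h4 : ‖p.2‖ * ‖pft F p‖ ≤ ‖2 * Real.pi * Complex.I * p.2 * pft F p‖ := by
      have : ‖2 * Real.pi * Complex.I * p.2 * pft F p‖
          = (2 * Real.pi) * (‖p.2‖ * ‖pft F p‖) := by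
        simp [abs_of_pos Real.pi_pos]; ring
      rw [this]
      refine le_mul_of_one_le_left (by positivity) ?_
      linarith [Real.pi_gt_three]
    calc (1 + ‖p.1‖) ^ m * (1 + ‖p.2‖) ^ (N + 1) * ‖pft F p‖
        = (1 + ‖p.1‖) ^ m * (1 + ‖p.2‖) ^ N * ‖pft F p‖
          + (1 + ‖p.1‖) ^ m * (1 + ‖p.2‖) ^ N * (‖p.2‖ * ‖pft F p‖) := by ring
      _ ≤ C₁ + (1 + ‖p.1‖) ^ m * (1 + ‖p.2‖) ^ N
          * ‖2 * Real.pi * Complex.I * p.2 * pft F p‖ := by gcongr; exact h₁ p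
      _ ≤ C₁ + C₂ := by gcongr

lemma stronglyMeasurable_pft (F : SchwartzMap (E3 × ℝ) ℂ) : StronglyMeasurable (pft F) := by
  have : pft F = fun p : E3 × ℝ => ∫ u, F (p.1, u) * fker p.2 u :=
    funext fun p => fourier_eq_fker _ _
  rw [this]
  refine StronglyMeasurable.integral_prod_right' (f := fun q : (E3 × ℝ) × ℝ =>
    F (q.1.1, q.2) * fker q.1.2 q.2) (Continuous.stronglyMeasurable ?_)
  exact (F.continuous.comp (by fun_prop)).mul
    (continuous_fker.comp (f := fun q : (E3 × ℝ) × ℝ => (q.1.2, q.2)) (by fun_prop))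

lemma integrable_weight :
    Integrable fun p : E3 × ℝ => (1 + ‖p.1‖) ^ (-4 : ℝ) * (1 + ‖p.2‖) ^ (-2 : ℝ) := by
  have h : Integrable fun k : E3 => (1 + ‖k‖) ^ (-4 : ℝ) :=
    integrable_one_add_norm (by simp; norm_num)
  exact h.mul_prod integrable_japanese_real

/-- `pft F` decays rapidly in both variables, in a form ready for integration; the additional
factor `1 + ‖p.2‖` on the left provides smallness of the tails in `p.2`. -/
lemma pft_weight (F : SchwartzMap (E3 × ℝ) ℂ) (j : ℕ) :
    ∃ C, 0 ≤ C ∧ ∀ p : E3 × ℝ,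
      (1 + ‖p.2‖) * (((1 + ‖p.1‖) * (1 + ‖p.2‖)) ^ j * ‖pft F p‖)
        ≤ C * ((1 + ‖p.1‖) ^ (-4 : ℝ) * (1 + ‖p.2‖) ^ (-2 : ℝ)) := by
  obtain ⟨C, hC⟩ := pft_decay (j + 4) (j + 3) F
  refine ⟨C, ?_, fun p => ?_⟩
  · refine le_trans ?_ (hC 0); positivity
  have h1 : (0 : ℝ) < 1 + ‖p.1‖ := by positivity
  have h2 : (0 : ℝ) < 1 + ‖p.2‖ := by positivity
  have e4 : (1 + ‖p.1‖) ^ (-4 : ℝ) = ((1 + ‖p.1‖) ^ 4)⁻¹ := by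
    rw [Real.rpow_neg h1.le]; norm_cast
  have e2 : (1 + ‖p.2‖) ^ (-2 : ℝ) = ((1 + ‖p.2‖) ^ 2)⁻¹ := by
    rw [Real.rpow_neg h2.le]; norm_cast
  rw [e4, e2, ← mul_inv, ← div_eq_mul_inv, le_div_iff₀ (by positivity)]
  refine le_trans (le_of_eq ?_) (hC p)
  rw [mul_pow]
  ring

lemma fourier_shift_slice (F : SchwartzMap (E3 × ℝ) ℂ) (k : E3) (a w : ℝ) :
    𝓕 (fun s : ℝ => F (k, s - a)) w = fker a w * pft F (k, w) := by
  unfold pft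
  rw [fourier_eq_fker, fourier_eq_fker, ← integral_const_mul,
    ← integral_add_right_eq_self _ a]
  refine integral_congr_ae (ae_of_all _ fun u => ?_)
  simp only [add_sub_cancel_right]
  have : fker w (u + a) = fker a w * fker w u := by
    unfold fker
    rw [← Complex.exp_add]
    congr 1
    push_cast; ring
  rw [this]; ring

lemma integrable_pft_slice (F : SchwartzMap (E3 × ℝ) ℂ) (k : E3) :
    Integrable fun w : ℝ => pft F (k, w) := by
  obtain ⟨C, hC0, hC⟩ := pft_weight F 0
  refine ((integrable_japanese_real.const_mul (C * (1 + ‖k‖) ^ (-4 : ℝ)))).mono'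
    ((stronglyMeasurable_pft F).comp_measurable (by fun_prop)).aestronglyMeasurable
    (ae_of_all _ fun w => ?_)
  have := hC (k, w)
  simp only [pow_zero, one_mul] at this
  rw [mul_assoc]
  refine le_trans (le_mul_of_one_le_left (norm_nonneg _) ?_) this
  linarith [norm_nonneg w]

lemma nice_slice (F : SchwartzMap (E3 × ℝ) ℂ) (k : E3) (a : ℝ) :
    Nice fun s : ℝ => F (k, s - a) where
  diff := fun s => ((hasDerivAt_slice F k (s - a)).comp_sub_const s a).differentiableAt
  bdd := by
    obtain ⟨C, hC⟩ := schwartz_decay F 0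
    exact ⟨C, fun s => by simpa using hC (k, s - a)⟩
  bdd_deriv := by
    obtain ⟨C, hC⟩ := schwartz_decay (∂_{((0 : E3), (1 : ℝ))} F) 0
    refine ⟨C, fun s => ?_⟩
    rw [((hasDerivAt_slice F k (s - a)).comp_sub_const s a).deriv]
    simpa using hC (k, s - a)
  int := (integrable_slice F k).comp_sub_right a
  int_fourier := by
    have : 𝓕 (fun s : ℝ => F (k, s - a)) = fun w => fker a w * pft F (k, w) :=
      funext fun w => fourier_shift_slice F k a w
    rw [this]
    exact (integrable_pft_slice F k).bdd_mul (c := 1)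
      (continuous_fker_right a).aestronglyMeasurable (ae_of_all _ fun w => (norm_fker a w).le)

lemma pvInner_tendsto (F : SchwartzMap (E3 × ℝ) ℂ) (t : ℝ) (k v : E3) :
    Tendsto (fun δ : ℝ =>
          ∫ u in {u : ℝ | δ ≤ |u + (⟪k, v⟫ : ℝ)|},
            F (k, u) * Complex.exp (-Complex.I * (((u + (⟪k, v⟫ : ℝ) : ℝ) : ℂ)) * (t : ℂ)) /
              (((u + (⟪k, v⟫ : ℝ) : ℝ) : ℂ)))
        (nhdsWithin 0 (Set.Ioi 0))
        (nhds (pvHalf (fun s => F (k, s - ⟪k, v⟫)) (t / (2 * Real.pi)))) := by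
  refine ((nice_slice F k ⟪k, v⟫).tendsto_pvHalf (t / (2 * Real.pi))).congr fun δ => ?_
  have hm : ∀ a : ℝ, MeasurableSet {u : ℝ | δ ≤ |u + a|} := fun a =>
    measurableSet_le (by fun_prop) (by fun_prop)
  have hm0 : MeasurableSet {u : ℝ | δ ≤ |u|} := measurableSet_le (by fun_prop) (by fun_prop)
  rw [← integral_indicator (hm _), ← integral_indicator hm0,
    ← integral_add_right_eq_self _ (⟪k, v⟫ : ℝ)]
  refine integral_congr_ae (ae_of_all _ fun u => ?_)
  have he : fker (t / (2 * Real.pi)) (u + ⟪k, v⟫)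
      = Complex.exp (-Complex.I * (((u + (⟪k, v⟫ : ℝ) : ℝ) : ℂ)) * (t : ℂ)) := by
    unfold fker
    congr 1
    have : (-2 * Real.pi * (u + ⟪k, v⟫) * (t / (2 * Real.pi)) : ℝ) = -((u + ⟪k, v⟫) * t) := by
      field_simp
    rw [this]
    push_cast; ring
  simp only [Set.indicator, Set.mem_ofPred_eq, add_sub_cancel_right, he]

lemma pvInner_eq (F : SchwartzMap (E3 × ℝ) ℂ) (t : ℝ) (k v : E3) :
    pvInner F t k v = pvHalf (fun s => F (k, s - ⟪k, v⟫)) (t / (2 * Real.pi)) :=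
  (pvInner_tendsto F t k v).limUnder_eq

lemma slice_eq_integral (F : SchwartzMap (E3 × ℝ) ℂ) (k : E3) (a : ℝ) :
    F (k, -a) = ∫ w, fker a w * pft F (k, w) := by
  have h := (nice_slice F k a).integral_fourier 0
  simp only [fourier_shift_slice, zero_sub] at h
  rw [← h]
  simp [fker]

/-! ### Smoothness and decay of the oscillatory integrals -/

/-- The oscillatory integral `∫_{ℝ³} ∫_S e^{-2πi w k·v} (pft F)(k, w) dw dk`. -/
def osc (F : SchwartzMap (E3 × ℝ) ℂ) (S : Set ℝ) (v : E3) : ℂ :=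
  ∫ p in (Set.univ : Set E3) ×ˢ S, fker ⟪p.1, v⟫ p.2 * pft F p

lemma integrable_moment (F : SchwartzMap (E3 × ℝ) ℂ) (j : ℕ) :
    Integrable fun p : E3 × ℝ => ((1 + ‖p.1‖) * (1 + ‖p.2‖)) ^ j * ‖pft F p‖ := by
  obtain ⟨C, hC0, hC⟩ := pft_weight F j
  refine (integrable_weight.const_mul C).mono' ?_ (ae_of_all _ fun p => ?_)
  · exact (Continuous.aestronglyMeasurable (by fun_prop)).mul
      (stronglyMeasurable_pft F).norm.aestronglyMeasurable
  · rw [Real.norm_of_nonneg (by positivity)]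
    exact (le_mul_of_one_le_left (by positivity) (by linarith [norm_nonneg p.2])).trans (hC p)

lemma integrable_osc (F : SchwartzMap (E3 × ℝ) ℂ) (v : E3) :
    Integrable fun p : E3 × ℝ => fker ⟪p.1, v⟫ p.2 * pft F p := by
  have h : Integrable (pft F) := by
    refine (integrable_norm_iff (stronglyMeasurable_pft F).aestronglyMeasurable).1 ?_
    simpa using integrable_moment F 0
  refine h.bdd_mul (c := 1) (Continuous.aestronglyMeasurable ?_)
    (ae_of_all _ fun w => (norm_fker _ w.2).le)
  exact continuous_fker.comp (f := fun p : E3 × ℝ => ((⟪p.1, v⟫ : ℝ), p.2)) (by fun_prop)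

lemma osc_eq_iterated (F : SchwartzMap (E3 × ℝ) ℂ) (S : Set ℝ) (v : E3) :
    osc F S v = ∫ k : E3, ∫ w in S, fker ⟪k, v⟫ w * pft F (k, w) := by
  unfold osc
  rw [Measure.volume_eq_prod, setIntegral_prod _ (integrable_osc F v).integrableOn, setIntegral_univ]

lemma integrable_osc_inner (F : SchwartzMap (E3 × ℝ) ℂ) (S : Set ℝ) (v : E3) :
    Integrable fun k : E3 => ∫ w in S, fker ⟪k, v⟫ w * pft F (k, w) := by
  have h : Integrable (fun p : E3 × ℝ => fker ⟪p.1, v⟫ p.2 * pft F p)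
      ((volume : Measure E3).prod (volume.restrict S)) := by
    have := (integrable_osc F v).integrableOn (s := (Set.univ : Set E3) ×ˢ S)
    rwa [IntegrableOn, Measure.volume_eq_prod, ← Measure.prod_restrict, Measure.restrict_univ]
      at this
  exact h.integral_prod_left

lemma integral_pvInner_eq (F : SchwartzMap (E3 × ℝ) ℂ) (t : ℝ) (v : E3) :
    ∫ k : E3, pvInner F t k v = -Complex.I * Real.pi * osc F Set.univ v
      + 2 * Real.pi * Complex.I * osc F (Set.Ioi (t / (2 * Real.pi))) v := by
  rw [osc_eq_iterated, osc_eq_iterated, ← integral_const_mul, ← integral_const_mul,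
    ← integral_add ((integrable_osc_inner F _ v).const_mul _)
      ((integrable_osc_inner F _ v).const_mul _)]
  refine integral_congr_ae (ae_of_all _ fun k => ?_)
  simp only [pvInner_eq, (nice_slice F k ⟪k, v⟫).pvHalf_eq, fourier_shift_slice, zero_sub,
    slice_eq_integral F k ⟪k, v⟫, setIntegral_univ]

lemma integral_slice_eq (F : SchwartzMap (E3 × ℝ) ℂ) (v : E3) :
    ∫ k : E3, F (k, -(⟪k, v⟫ : ℝ)) = osc F Set.univ v := by
  simp only [osc_eq_iterated, slice_eq_integral F _ ⟪_, v⟫, setIntegral_univ]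

/-- The map `(k, w) ↦ (w k, (k, w))`. It turns the phase `w k·v`, which is bilinear in `(k, w)`,
into a linear function of the new variable. -/
def emb (p : E3 × ℝ) : E3 × (E3 × ℝ) := (p.2 • p.1, p)

lemma continuous_emb : Continuous emb := by unfold emb; fun_prop

lemma norm_emb_le (p : E3 × ℝ) : ‖emb p‖ ≤ (1 + ‖p.1‖) * (1 + ‖p.2‖) := by
  have h1 := norm_nonneg p.1
  have h2 := norm_nonneg p.2
  unfold emb
  refine norm_prod_le_iff.2 ⟨?_, norm_prod_le_iff.2 ⟨?_, ?_⟩⟩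
  · rw [norm_smul]; nlinarith
  · simp only; nlinarith
  · simp only; nlinarith

/-- The pairing `((y, p), v) ↦ y·v`. -/
def pairing : (E3 × (E3 × ℝ)) →L[ℝ] E3 →L[ℝ] ℝ :=
  (innerSL ℝ).comp (ContinuousLinearMap.fst ℝ E3 (E3 × ℝ))

/-- Lebesgue measure on `ℝ³ × S`, transported by `emb`. -/
def embMeasure (S : Set ℝ) : Measure (E3 × (E3 × ℝ)) :=
  ((volume : Measure (E3 × ℝ)).restrict (Set.univ ×ˢ S)).map emb

lemma aestronglyMeasurable_pft_snd (F : SchwartzMap (E3 × ℝ) ℂ) (S : Set ℝ) :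
    AEStronglyMeasurable (fun q : E3 × (E3 × ℝ) => pft F q.2) (embMeasure S) :=
  ((stronglyMeasurable_pft F).comp_measurable measurable_snd).aestronglyMeasurable

/-- `osc F S` is a Fourier integral in `v` over the transported measure, so that the smoothness
theory of Fourier integrals applies to it. -/
lemma osc_eq_vectorFourier (F : SchwartzMap (E3 × ℝ) ℂ) (S : Set ℝ) :
    osc F S = VectorFourier.fourierIntegral 𝐞 (embMeasure S) pairing.toLinearMap₁₂
      (fun q => pft F q.2) := by
  ext v
  unfold VectorFourier.fourierIntegral embMeasure
  rw [integral_map continuous_emb.aemeasurable]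
  · refine integral_congr_ae (ae_of_all _ fun p => ?_)
    simp only [emb, pairing, fker, Circle.smul_def, Real.fourierChar_apply, smul_eq_mul]
    congr 2
    simp
    ring
  · have h1 : Continuous fun q : E3 × (E3 × ℝ) => 𝐞 (-(pairing.toLinearMap₁₂ q v)) := by
      refine Real.continuous_fourierChar.comp ?_
      have : Continuous fun q : E3 × (E3 × ℝ) => pairing q v := by fun_prop
      exact this.neg
    exact h1.aestronglyMeasurable.smul (aestronglyMeasurable_pft_snd F S)

lemma integrable_emb_moment (F : SchwartzMap (E3 × ℝ) ℂ) (S : Set ℝ) (n : ℕ) :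
    Integrable (fun q : E3 × (E3 × ℝ) => ‖q‖ ^ n * ‖pft F q.2‖) (embMeasure S) := by
  unfold embMeasure
  rw [integrable_map_measure]
  · refine (integrable_moment F n).integrableOn.mono' ?_ (ae_of_all _ fun p => ?_)
    · refine AEStronglyMeasurable.mul (Continuous.aestronglyMeasurable ?_)
        (stronglyMeasurable_pft F).norm.aestronglyMeasurable
      exact (continuous_emb.norm).pow n
    · simp only [Function.comp]
      rw [Real.norm_of_nonneg (by positivity)]
      gcongr
      · exact norm_emb_le p
      · exact le_rfl
  · exact (Continuous.aestronglyMeasurable (by fun_prop)).mul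
      (aestronglyMeasurable_pft_snd F S).norm
  · exact continuous_emb.aemeasurable

lemma contDiff_osc (F : SchwartzMap (E3 × ℝ) ℂ) (S : Set ℝ) (n : ℕ) :
    ContDiff ℝ n (osc F S) := by
  rw [osc_eq_vectorFourier]
  exact_mod_cast VectorFourier.contDiff_fourierIntegral (N := (n : ℕ∞)) pairing
    (fun m _ => integrable_emb_moment F S m)

/-- The tails `w > x` of the oscillatory integral are `O(1/x)` in every `C^j` norm, because
`x ≤ 1 + ‖w‖` there and one extra power of `1 + ‖w‖` is integrable against `pft F`. -/
lemma norm_iteratedFDeriv_osc_le (F : SchwartzMap (E3 × ℝ) ℂ) (j : ℕ) :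
    ∃ C, ∀ x : ℝ, 0 < x → ∀ v, ‖iteratedFDeriv ℝ j (osc F (Set.Ioi x)) v‖ ≤ C / x := by
  obtain ⟨C, hC0, hC⟩ := pft_weight F j
  set W : E3 × ℝ → ℝ := fun p => C * ((1 + ‖p.1‖) ^ (-4 : ℝ) * (1 + ‖p.2‖) ^ (-2 : ℝ)) with hW
  have hWi : Integrable W := integrable_weight.const_mul C
  refine ⟨(2 * Real.pi * ‖pairing‖) ^ j * ∫ p, W p, fun x hx v => ?_⟩
  have hmS : MeasurableSet ((Set.univ : Set E3) ×ˢ Set.Ioi x) :=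
    MeasurableSet.univ.prod measurableSet_Ioi
  rw [osc_eq_vectorFourier, VectorFourier.iteratedFDeriv_fourierIntegral (N := (j : ℕ∞)) pairing
    (fun m _ => integrable_emb_moment F _ m) (aestronglyMeasurable_pft_snd F _) le_rfl]
  refine (VectorFourier.norm_fourierIntegral_le_integral_norm _ _ _ _ _).trans ?_
  have hmom := integrable_emb_moment F (Set.Ioi x) j
  calc ∫ q, ‖VectorFourier.fourierPowSMulRight pairing (fun q => pft F q.2) q j‖
        ∂(embMeasure (Set.Ioi x))
      ≤ ∫ q, (2 * Real.pi * ‖pairing‖) ^ j * (‖q‖ ^ j * ‖pft F q.2‖)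
          ∂(embMeasure (Set.Ioi x)) := by
        refine integral_mono_of_nonneg (ae_of_all _ fun q => norm_nonneg _)
          (hmom.const_mul _) (ae_of_all _ fun q => ?_)
        refine (VectorFourier.norm_fourierPowSMulRight_le pairing _ q j).trans (le_of_eq ?_)
        ring
    _ = (2 * Real.pi * ‖pairing‖) ^ j *
          ∫ p in (Set.univ : Set E3) ×ˢ Set.Ioi x, ‖emb p‖ ^ j * ‖pft F p‖ := by
        rw [integral_const_mul]
        congr 1
        unfold embMeasure at hmom ⊢
        rw [integral_map continuous_emb.aemeasurable hmom.aestronglyMeasurable]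
        rfl
    _ ≤ (2 * Real.pi * ‖pairing‖) ^ j *
          ∫ p in (Set.univ : Set E3) ×ˢ Set.Ioi x, W p / x := by
        refine mul_le_mul_of_nonneg_left ?_ (by positivity)
        refine integral_mono_of_nonneg (ae_of_all _ fun p => by positivity)
          (hWi.div_const x).integrableOn ?_
        refine (ae_restrict_iff' hmS).2 (ae_of_all _ fun p hp => ?_)
        have hp : x < p.2 := hp.2
        have hx2 : x ≤ 1 + ‖p.2‖ := by
          rw [Real.norm_of_nonneg (hx.trans hp).le]; linarith
        simp only
        rw [le_div_iff₀ hx]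
        refine le_trans ?_ (hC p)
        rw [mul_comm]
        gcongr
        exact norm_emb_le p
    _ ≤ (2 * Real.pi * ‖pairing‖) ^ j * ∫ p, W p / x := by
        refine mul_le_mul_of_nonneg_left ?_ (by positivity)
        refine setIntegral_le_integral (hWi.div_const x) (ae_of_all _ fun p => ?_)
        simp only [hW, Pi.zero_apply]
        positivity
    _ = (2 * Real.pi * ‖pairing‖) ^ j * (∫ p, W p) / x := by
        rw [integral_div, mul_div_assoc]

/-- Let `F ∈ 𝒮(ℝ³ × ℝ, ℂ)` and `M ∈ ℕ₀`.  For `t > 0` the function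
`p_t(v) = ∫ (PV ∫ F(k,u) e^{−i(u+k·v)t}/(u+k·v) du) dk` is well defined (the inner principal
value limits exist), and, as `t → +∞`, `p_t` converges to
`v ↦ −iπ ∫ F(k, −k·v) dk` uniformly on `ℝ³` together with all derivatives up to order `M`. -/
theorem statement6 (F : SchwartzMap (EuclideanSpace ℝ (Fin 3) × ℝ) ℂ) (M : ℕ) :
    (∀ t : ℝ, 0 < t → ∀ v k : E3,
      Tendsto (fun δ : ℝ =>
          ∫ u in {u : ℝ | δ ≤ |u + (⟪k, v⟫ : ℝ)|},
            F (k, u) * Complex.exp (-Complex.I * (((u + (⟪k, v⟫ : ℝ) : ℝ) : ℂ)) * (t : ℂ)) /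
              (((u + (⟪k, v⟫ : ℝ) : ℝ) : ℂ)))
        (nhdsWithin 0 (Set.Ioi 0)) (nhds (pvInner F t k v))) ∧
    (∀ j : ℕ, j ≤ M →
      TendstoUniformly
        (fun (t : ℝ) (v : E3) =>
          iteratedFDeriv ℝ j (fun w : E3 => ∫ k : E3, pvInner F t k w) v)
        (fun v : E3 =>
          iteratedFDeriv ℝ j
            (fun w : E3 => -Complex.I * (Real.pi : ℂ) * ∫ k : E3, F (k, -(⟪k, w⟫ : ℝ))) v)
        atTop) := by
  refine ⟨fun t _ v k => ?_, fun j _ => ?_⟩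
  · rw [pvInner_eq]
    exact pvInner_tendsto F t k v
  · simp only [integral_pvInner_eq, integral_slice_eq]
    obtain ⟨C, hC⟩ := norm_iteratedFDeriv_osc_le F j
    rw [Metric.tendstoUniformly_iff]
    intro ε hε
    have hlim : Tendsto (fun t : ℝ => 2 * Real.pi * (C / (t / (2 * Real.pi)))) atTop (𝓝 0) := by
      have h1 : Tendsto (fun t : ℝ => t / (2 * Real.pi)) atTop atTop :=
        tendsto_id.atTop_div_const (by positivity)
      simpa using (h1.const_div_atTop C).const_mul (2 * Real.pi)
    filter_upwards [hlim.eventually_lt_const hε, eventually_gt_atTop 0] with t ht ht0 v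
    have hlimit : ContDiff ℝ j fun w => -Complex.I * (Real.pi : ℂ) * osc F Set.univ w :=
      contDiff_const.mul (contDiff_osc F _ j)
    have htail := contDiff_osc F (Set.Ioi (t / (2 * Real.pi))) j
    rw [dist_comm, dist_eq_norm, fun_iteratedFDeriv_add_apply hlimit.contDiffAt
      (contDiff_const.mul htail).contDiffAt, add_sub_cancel_left]
    refine lt_of_le_of_lt ?_ ht
    have hs : (fun w => 2 * (Real.pi : ℂ) * Complex.I * osc F (Set.Ioi (t / (2 * Real.pi))) w)
        = (2 * (Real.pi : ℂ) * Complex.I) • osc F (Set.Ioi (t / (2 * Real.pi))) := rfl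
    rw [hs, iteratedFDeriv_const_smul_apply htail.contDiffAt, norm_smul]
    have h2 : ‖(2 * Real.pi * Complex.I : ℂ)‖ = 2 * Real.pi := by
      simp [abs_of_pos Real.pi_pos]
    rw [h2]
    gcongr
    exact hC _ (by positivity) v
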